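/- Let m be an odd prime and let h be an integer with 3 ≤ h ≤ m−1 such that either (I) m ≥ 5 and 2h ≡ 3 (mod m), or (II) m ≡ 2 (mod 3) and h = (m+1)/3. Set e = 3^h + 13. Then the equation (x+1)^e + x^e + 1 = 0 has the unique solution x = 1 in the finite field F_{3^m}; that is, for every x in F_{3^m}, (x+1)^e + x^e + 1 = 0 if and only if x = 1. -/

import Mathlib

/-!
Substitute `x = 1 + 1/z` and put `w = z³ - z`. In characteristic 3 the equation becomes
`(1 - w²) ((σ z - z) w - (1 - w²)) = 0`, where `σ` is the `h`-th power of Frobenius. The first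
factor does not vanish: `w = ±1` would give `z = z ^ 3 ^ m = z ± m`, although `3 ∤ m`. So
`σ z = z + 1/w - w`, whence `σ w` is a rational function of `w`.

If `2h ≡ 3`, then `σ² z = z ^ 27` yields a polynomial equation for `w` whose roots other than `±1`
satisfy `w + w³ + w⁹ + w²⁷ + w⁸¹ = ±1`, that is `z ^ 243 = z ± 1`, and this is impossible for the
same reason as above. If `3h ≡ 1`, then `σ³ z = z³` yields a polynomial equation for `w` that
splits into sums of two coprime squares, and `-1` is not a square because `m` is odd.
-/

theorem pow_pow_eq_pow_pow_of_modEq {M : Type*} [Monoid M] {p m a b : ℕ} {z : M}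
    (hz : z ^ p ^ m = z) (hab : a ≡ b [MOD m]) : z ^ p ^ a = z ^ p ^ b := by
  have hper : Function.IsPeriodicPt (· ^ p) m z := by
    simpa only [Function.IsPeriodicPt, Function.IsFixedPt, pow_iterate] using hz
  have hiter : (· ^ p)^[a] z = (· ^ p)^[b] z := by
    rw [← hper.iterate_mod_apply a, ← hper.iterate_mod_apply b, hab]
  simpa only [pow_iterate] using hiter

theorem sq_add_sq_ne_zero_of_isCoprime {R : Type*} [CommRing R] (hR : ¬IsSquare (-1 : R)) {a b : R}
    (hab : IsCoprime a b) : a ^ 2 + b ^ 2 ≠ 0 := by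
  obtain ⟨u, v, huv⟩ := hab
  exact fun h => hR ⟨u * b - v * a,
    by linear_combination (u * a + v * b + 1) * huv - (u ^ 2 + v ^ 2) * h⟩

theorem not_isSquare_neg_one_of_card_eq {F : Type*} [Field F] {m : ℕ}
    (hF : Nat.card F = 3 ^ m) (hm : Odd m) : ¬IsSquare (-1 : F) := by
  have : Finite F := Nat.finite_of_card_ne_zero (by simp [hF])
  have := Fintype.ofFinite F
  obtain ⟨k, rfl⟩ := hm
  rw [FiniteField.isSquare_neg_one_iff, ← Nat.card_eq_fintype_card, hF, not_not, pow_succ, pow_mul,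
    Nat.mul_mod, Nat.pow_mod]
  norm_num

section ArtinSchreier

variable {R : Type*} [CommRing R] {p : ℕ}

/-- The Artin–Schreier operator `z ↦ z ^ p - z`, usually written `℘`. -/
def artinSchreier (p : ℕ) (z : R) : R := z ^ p - z

theorem map_artinSchreier {S : Type*} [CommRing S] (σ : R →+* S) (z : R) :
    σ (artinSchreier p z) = artinSchreier p (σ z) := by
  simp only [artinSchreier, map_sub, map_pow]

variable [Fact p.Prime] [CharP R p]

theorem pow_char_pow_eq_add_sum_artinSchreier (z : R) (n : ℕ) :
    z ^ p ^ n = z + ∑ i ∈ Finset.range n, artinSchreier p z ^ p ^ i := by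
  induction n with
  | zero => simp
  | succ n ih =>
    have hp : z ^ p = z + artinSchreier p z := (add_sub_cancel z (z ^ p)).symm
    rw [pow_succ', pow_mul, hp, add_pow_char_pow, ih, Finset.sum_range_succ, add_assoc]

theorem pow_char_pow_mul_eq_add_natCast_mul {z c : R} {n : ℕ} (hc : c ^ p = c)
    (h : z ^ p ^ n = z + c) (k : ℕ) : z ^ p ^ (n * k) = z + k * c := by
  have hck (j : ℕ) : c ^ p ^ j = c := by
    simpa only [pow_iterate] using Function.iterate_fixed (f := (· ^ p)) hc j
  induction k with
  | zero => simp
  | succ k ih =>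
    rw [Nat.mul_succ, add_comm, pow_add, pow_mul, h, add_pow_char_pow, ih, hck, Nat.cast_succ]
    ring

theorem eq_zero_of_pow_char_pow_eq_add [NoZeroDivisors R] {z c : R} {m n : ℕ} (hm : ¬p ∣ m)
    (hz : z ^ p ^ m = z) (hc : c ^ p = c) (h : z ^ p ^ n = z + c) : c = 0 := by
  have hmn : z ^ p ^ (n * m) = z := by
    have hmod : n * m ≡ 0 [MOD m] := Nat.modEq_zero_iff_dvd.mpr (Nat.dvd_mul_left m n)
    simpa using pow_pow_eq_pow_pow_of_modEq hz hmod
  have hmc : (m : R) * c = 0 := by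
    simpa [pow_char_pow_mul_eq_add_natCast_mul hc h] using hmn
  exact (mul_eq_zero.mp hmc).resolve_left fun h0 => hm ((CharP.cast_eq_zero_iff R p m).mp h0)

end ArtinSchreier

section CharThree

variable {R : Type*} [CommRing R] [CharP R 3]

theorem sq_ne_one_of_pow_three_pow_eq_add [IsDomain R] {z c : R} {m n : ℕ} (hm : ¬3 ∣ m)
    (hz : z ^ 3 ^ m = z) (h : z ^ 3 ^ n = z + c) : c ^ 2 ≠ 1 := by
  intro hc
  have hc0 : c = 0 := eq_zero_of_pow_char_pow_eq_add hm hz (by linear_combination c * hc) h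
  simp [hc0] at hc

theorem artinSchreier_sq_ne_one [IsDomain R] {z : R} {m : ℕ} (hm : ¬3 ∣ m) (hz : z ^ 3 ^ m = z) :
    artinSchreier 3 z ^ 2 ≠ 1 :=
  sq_ne_one_of_pow_three_pow_eq_add (n := 1) hm hz (by simp [artinSchreier])

theorem one_add_pow_three_pow_add_thirteen (h : ℕ) (z : R) :
    (1 + z) ^ (3 ^ h + 13) = (1 + z ^ 3 ^ h) * (1 + z ^ 9) * (1 + z ^ 3) * (1 + z) := by
  rw [pow_add, add_pow_char_pow, one_pow]
  grind

theorem one_sub_pow_add_one_add_pow_add_pow (h : ℕ) (z : R) :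
    (1 - z) ^ (3 ^ h + 13) + (1 + z) ^ (3 ^ h + 13) + z ^ (3 ^ h + 13) =
      (1 - artinSchreier 3 z ^ 2) *
        ((z ^ 3 ^ h - z) * artinSchreier 3 z - (1 - artinSchreier 3 z ^ 2)) := by
  have hneg : (-z) ^ 3 ^ h = -z ^ 3 ^ h := (Odd.pow (by decide)).neg_pow z
  rw [sub_eq_add_neg, one_add_pow_three_pow_add_thirteen, one_add_pow_three_pow_add_thirteen,
    hneg, pow_add, artinSchreier]
  grind

theorem two_pow_three_pow_add_thirteen (h : ℕ) : (1 + 1 : R) ^ (3 ^ h + 13) = 1 := by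
  have hneg : (1 + 1 : R) = -1 := by grind
  have heven : Even (3 ^ h + 13) := (Odd.pow (by decide)).add_odd (by decide)
  rw [hneg, heven.neg_one_pow]

end CharThree

section Elimination

variable {R : Type*} [CommRing R]

/-- The real part of a polynomial of degree 14 over `𝔽₉ = 𝔽₃(i)`, with imaginary part `factorIm`.
Its norm `factorRe ^ 2 + factorIm ^ 2` is the factor of degree 28 of the polynomial equation for
`s = (z ^ 3 - z) ^ 2` that arises when `σ ^ 3` is the Frobenius map. -/
def factorRe (s : R) : R := s ^ 14 + s ^ 13 + s ^ 11 + s ^ 9 - s ^ 7 + s ^ 5 + s ^ 4 + s ^ 2 - 1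

/-- The imaginary part of the polynomial over `𝔽₉ = 𝔽₃(i)` whose real part is `factorRe`. -/
def factorIm (s : R) : R := s ^ 13 - s ^ 12 + s ^ 10 + s ^ 8 + s ^ 7 - s ^ 5 - s ^ 4 + s ^ 2 - s + 1

variable [CharP R 3] {w₀ w₁ w₂ v₀ v₁ v₂ : R}

-- In the two eliminations `wᵢ` stands for `σⁱ w` and `vᵢ` for the increment `σⁱ⁺¹ z - σⁱ z`.
theorem sq_sub_one_pow_four_mul_eq_zero_of_add_eq (h₀ : v₀ * w₀ = 1 - w₀ ^ 2)
    (h₁ : v₁ * w₁ = 1 - w₁ ^ 2) (hw₁ : w₁ * w₀ ^ 3 = 1 - w₀ ^ 2 - w₀ ^ 4 - w₀ ^ 6)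
    (hv : v₀ + v₁ = w₀ + w₀ ^ 3 + w₀ ^ 9) :
    (w₀ ^ 2 - 1) ^ 4 * (w₀ ^ 10 - w₀ ^ 8 - w₀ ^ 2 - 1) = 0 := by
  have hv₁ : v₁ * w₀ = w₀ ^ 10 + w₀ ^ 4 + 2 * w₀ ^ 2 - 1 := by linear_combination w₀ * hv - h₀
  have hpoly : (w₁ * w₀ ^ 3) * (v₁ * w₀) * w₀ ^ 2 = w₀ ^ 6 - (w₁ * w₀ ^ 3) ^ 2 := by
    linear_combination w₀ ^ 6 * h₁
  rw [hw₁, hv₁] at hpoly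
  linear_combination (norm := grind) -hpoly

theorem sum_pow_three_pow_sq_eq_one [IsDomain R] {w : R} (hw : w ^ 10 - w ^ 8 - w ^ 2 - 1 = 0) :
    (∑ i ∈ Finset.range 5, w ^ 3 ^ i) ^ 2 = 1 := by
  have hfactor :
      (w ^ 5 + w ^ 4 + w ^ 2 + w + 1) * (w ^ 5 - w ^ 4 - w ^ 2 + w - 1) = 0 := by grind
  have hsum : ∑ i ∈ Finset.range 5, w ^ 3 ^ i = w + w ^ 3 + w ^ 9 + w ^ 27 + w ^ 81 := by
    norm_num [Finset.sum_range_succ]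
  rw [hsum, sq_eq_one_iff]
  -- Both quintics are irreducible over `𝔽₃`, so the sum is the trace of the root `w`.
  rcases mul_eq_zero.mp hfactor with h | h
  · right
    grind
  · left
    grind

theorem isCoprime_factorRe_factorIm (s : R) : IsCoprime (factorRe s) (factorIm s) :=
  ⟨1 - s ^ 6 - s ^ 7 - s ^ 8 - s ^ 9,
    s ^ 10 - s ^ 8 + s ^ 7 - s ^ 5 - s ^ 4 - s ^ 2 - s - 1, by unfold factorRe factorIm; grind⟩

theorem isCoprime_pow_three_mul_one_sub_sq (w : R) :
    IsCoprime (w ^ 3 * (w ^ 2 + 1)) (1 - w ^ 2) :=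
  ⟨-w, 1 + w ^ 2 - w ^ 4, by grind⟩

theorem mul_sq_add_sq_eq_zero_of_add_add_eq (h₀ : v₀ * w₀ = 1 - w₀ ^ 2) (h₁ : v₁ * w₁ = 1 - w₁ ^ 2)
    (h₂ : v₂ * w₂ = 1 - w₂ ^ 2) (hw₁ : w₁ * w₀ ^ 3 = 1 - w₀ ^ 2 - w₀ ^ 4 - w₀ ^ 6)
    (hw₂ : w₂ * w₁ ^ 3 = 1 - w₁ ^ 2 - w₁ ^ 4 - w₁ ^ 6) (hv : v₀ + v₁ + v₂ = w₀) :
    (w₀ ^ 2 + 1 ^ 2) * ((w₀ ^ 2 - 1) ^ 2 + 1 ^ 2) *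
      ((w₀ ^ 3 * (w₀ ^ 2 + 1)) ^ 2 + (1 - w₀ ^ 2) ^ 2) *
        (factorRe (w₀ ^ 2) ^ 2 + factorIm (w₀ ^ 2) ^ 2) = 0 := by
  -- The hypotheses for `w₁` and `w₂` are scaled so that `w₁` occurs only in `n`, which is
  -- a polynomial in `w₀`.
  obtain ⟨n, hn⟩ : ∃ n, n = w₁ * w₀ ^ 3 := ⟨_, rfl⟩
  have hw₂' : w₂ * w₁ ^ 3 * w₀ ^ 18 = w₀ ^ 18 - w₀ ^ 12 * n ^ 2 - w₀ ^ 6 * n ^ 4 - n ^ 6 := by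
    rw [hn]; linear_combination w₀ ^ 18 * hw₂
  have hv₂ : (w₂ + v₂) * w₁ ^ 3 * w₀ ^ 18 = w₂ * w₁ ^ 3 * w₀ ^ 18 +
      (2 * w₀ ^ 2 - 1) * w₀ ^ 8 * n ^ 3 - (w₀ ^ 6 - n ^ 2) * w₀ ^ 6 * n ^ 2 := by
    rw [hn]
    linear_combination w₁ ^ 3 * w₀ ^ 18 * hv - w₁ ^ 3 * w₀ ^ 17 * h₀ - w₁ ^ 2 * w₀ ^ 18 * h₁
  have hpoly : (w₂ * w₁ ^ 3 * w₀ ^ 18) * ((w₂ + v₂) * w₁ ^ 3 * w₀ ^ 18) = w₀ ^ 18 * n ^ 6 := by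
    rw [hn]; linear_combination w₁ ^ 6 * w₀ ^ 36 * h₂
  rw [hv₂, hw₂', hn, hw₁] at hpoly
  unfold factorRe factorIm
  linear_combination (norm := grind) hpoly

end Elimination

/-- The equation `σ z = z + w⁻¹ - w`, where `w = z ^ 3 - z`, with the denominator cleared. For `σ`
the `h`-th power of Frobenius and `w ^ 2 ≠ 1` it is the equation `(x + 1) ^ e + x ^ e + 1 = 0`,
`e = 3 ^ h + 13`, in terms of `z = (x - 1)⁻¹`. -/
def IsShifted {R : Type*} [CommRing R] (σ : R →+* R) (z : R) : Prop :=
  (σ z - z) * artinSchreier 3 z = 1 - artinSchreier 3 z ^ 2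

namespace IsShifted

variable {R : Type*} [CommRing R] {σ : R →+* R} {z : R}

theorem map (hz : IsShifted σ z) : IsShifted σ (σ z) := by
  simpa only [IsShifted, map_sub, map_mul, map_pow, map_one, map_artinSchreier]
    using congrArg σ hz

variable [CharP R 3]

theorem artinSchreier_map_mul_pow (hz : IsShifted σ z) :
    artinSchreier 3 (σ z) * artinSchreier 3 z ^ 3 =
      1 - artinSchreier 3 z ^ 2 - artinSchreier 3 z ^ 4 - artinSchreier 3 z ^ 6 := by
  unfold IsShifted artinSchreier at *
  grind

variable [IsDomain R]

theorem map_map_ne_pow (hz : IsShifted σ z) {m : ℕ} (hm : ¬3 ∣ m) (hzm : z ^ 3 ^ m = z) :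
    σ (σ z) ≠ z ^ 3 ^ 3 := by
  intro hσ
  have hsum : σ z - z + (σ (σ z) - σ z) =
      artinSchreier 3 z + artinSchreier 3 z ^ 3 + artinSchreier 3 z ^ 9 := by
    rw [hσ, pow_char_pow_eq_add_sum_artinSchreier]
    norm_num [Finset.sum_range_succ]
  have hprod := sq_sub_one_pow_four_mul_eq_zero_of_add_eq hz hz.map
    hz.artinSchreier_map_mul_pow hsum
  have hw : artinSchreier 3 z ^ 2 - 1 ≠ 0 := sub_ne_zero.mpr (artinSchreier_sq_ne_one hm hzm)
  have hquintic := (mul_eq_zero.mp hprod).resolve_left (pow_ne_zero 4 hw)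
  exact sq_ne_one_of_pow_three_pow_eq_add hm hzm (pow_char_pow_eq_add_sum_artinSchreier z 5)
    (sum_pow_three_pow_sq_eq_one hquintic)

theorem map_map_map_ne_pow (hz : IsShifted σ z) (hR : ¬IsSquare (-1 : R)) :
    σ (σ (σ z)) ≠ z ^ 3 := by
  intro hσ
  have hsum : σ z - z + (σ (σ z) - σ z) + (σ (σ (σ z)) - σ (σ z)) = artinSchreier 3 z := by
    rw [hσ, artinSchreier]
    ring
  have hne {a b : R} (hab : IsCoprime a b) := sq_add_sq_ne_zero_of_isCoprime hR hab
  exact mul_ne_zero (mul_ne_zero (mul_ne_zero (hne isCoprime_one_right) (hne isCoprime_one_right))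
    (hne (isCoprime_pow_three_mul_one_sub_sq _))) (hne (isCoprime_factorRe_factorIm _))
    (mul_sq_add_sq_eq_zero_of_add_add_eq hz hz.map hz.map.map hz.artinSchreier_map_mul_pow
      hz.map.artinSchreier_map_mul_pow hsum)

end IsShifted

section Field

variable {K : Type*} [Field K] [CharP K 3]

theorem one_sub_pow_add_one_add_pow_add_pow_eq_zero {x : K} {e : ℕ} (hx : x ≠ 1)
    (he : (x + 1) ^ e + x ^ e + 1 = 0) :
    (1 - (x - 1)⁻¹) ^ e + (1 + (x - 1)⁻¹) ^ e + (x - 1)⁻¹ ^ e = 0 := by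
  have hx' : (x - 1) * (x - 1)⁻¹ = 1 := mul_inv_cancel₀ (sub_ne_zero.mpr hx)
  have hsub : 1 - (x - 1)⁻¹ = (x + 1) * (x - 1)⁻¹ := by grind
  have hadd : 1 + (x - 1)⁻¹ = x * (x - 1)⁻¹ := by linear_combination -hx'
  rw [hsub, hadd, mul_pow, mul_pow]
  linear_combination (x - 1)⁻¹ ^ e * he

theorem isShifted_iterateFrobenius {x : K} {h : ℕ} (hx : x ≠ 1)
    (hw : artinSchreier 3 (x - 1)⁻¹ ^ 2 ≠ 1)
    (he : (x + 1) ^ (3 ^ h + 13) + x ^ (3 ^ h + 13) + 1 = 0) :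
    IsShifted (iterateFrobenius K 3 h) (x - 1)⁻¹ := by
  have hprod := one_sub_pow_add_one_add_pow_add_pow_eq_zero hx he
  rw [one_sub_pow_add_one_add_pow_add_pow, mul_eq_zero, sub_eq_zero, sub_eq_zero] at hprod
  exact hprod.resolve_left hw.symm

end Field

theorem stmt1_general {F : Type*} [Field F] {m h : ℕ} (hF : Nat.card F = 3 ^ m) (hodd : Odd m)
    (hm : ¬3 ∣ m) (hh : 2 * h ≡ 3 [MOD m] ∨ 3 * h ≡ 1 [MOD m]) (x : F) :
    (x + 1) ^ (3 ^ h + 13) + x ^ (3 ^ h + 13) + 1 = 0 ↔ x = 1 := by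
  have : Finite F := Nat.finite_of_card_ne_zero (by simp [hF])
  have := Fintype.ofFinite F
  rw [Nat.card_eq_fintype_card] at hF
  have : CharP F 3 := charP_of_card_eq_prime_pow hF
  have hfix (z : F) : z ^ 3 ^ m = z := hF ▸ FiniteField.pow_card z
  constructor
  · intro he
    by_contra hx
    have hw := artinSchreier_sq_ne_one hm (hfix (x - 1)⁻¹)
    have hz := isShifted_iterateFrobenius hx hw he
    rcases hh with hh | hh
    · refine hz.map_map_ne_pow hm (hfix _) ?_
      simp only [iterateFrobenius_def, ← pow_mul, ← pow_add]
      exact pow_pow_eq_pow_pow_of_modEq (hfix _) (by rwa [← two_mul])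
    · refine hz.map_map_map_ne_pow (not_isSquare_neg_one_of_card_eq (by simpa using hF) hodd) ?_
      simp only [iterateFrobenius_def, ← pow_mul, ← pow_add]
      exact (pow_pow_eq_pow_pow_of_modEq (hfix _) (by convert hh using 1; ring)).trans (by simp)
  · rintro rfl
    rw [two_pow_three_pow_add_thirteen, one_pow]
    grind

theorem not_three_dvd_of_prime {m : ℕ} (hm : Nat.Prime m) (hne : m ≠ 3) : ¬3 ∣ m :=
  Nat.prime_three.coprime_iff_not_dvd.mp ((Nat.coprime_primes Nat.prime_three hm).mpr hne.symm)

theorem three_mul_add_one_div_three_modEq_one {m : ℕ} (hm : m % 3 = 2) :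
    3 * ((m + 1) / 3) ≡ 1 [MOD m] := by
  rw [show 3 * ((m + 1) / 3) = m + 1 by omega]
  exact Nat.add_mod_left m 1

theorem stmt1 (m h : ℕ) (hm : Nat.Prime m) (hodd : Odd m)
    (hh1 : 3 ≤ h) (hh2 : h ≤ m - 1)
    (hcond : (5 ≤ m ∧ 2 * h ≡ 3 [MOD m]) ∨ (m % 3 = 2 ∧ h = (m + 1) / 3)) :
    ∀ x : GaloisField 3 m, (x + 1) ^ (3 ^ h + 13) + x ^ (3 ^ h + 13) + 1 = 0 ↔ x = 1 :=
  stmt1_general (GaloisField.card 3 m hm.ne_zero) hodd (not_three_dvd_of_prime hm (by omega))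
    (hcond.imp And.right fun ⟨hm3, hh⟩ => hh ▸ three_mul_add_one_div_three_modEq_one hm3)
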